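/- Let C be an open convex cone in a finite-dimensional normed real vector space V and D a balanced cone of directions spanning V. If f : C → ℝ is D-convex and positively 1-homogeneous, then for every x₀ ∈ C ∩ D there exists a linear functional ℓ : V → ℝ with ℓ(x₀) = f(x₀) and f(y) ≥ ℓ(y) for all y ∈ C. In particular, f is convex at every point of C ∩ D. -/

import Mathlib

open Set Metric

/-- D-convexity of a real-valued function on a set `S`. -/
def DConvexOn {V : Type*} [NormedAddCommGroup V] [NormedSpace ℝ V]
    (D S : Set V) (f : V → ℝ) : Prop :=
  ∀ ⦃x y : V⦄, x ∈ S → y ∈ S → x - y ∈ D → segment ℝ x y ⊆ S →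
    ConvexOn ℝ (segment ℝ x y) f

lemma sep_upper {ι : Type*} [Fintype ι] [DecidableEq ι] (g : (ι → ℝ) → ℝ) (δ : ℝ) (hδ : 0 < δ)
    (hconv : ∀ t : ι → ℝ, (∀ j, |t j| ≤ δ) → ∀ i,
      ConvexOn ℝ (Icc (-δ) δ) (fun s => g (Function.update t i s))) :
    ∃ M, ∀ t : ι → ℝ, (∀ j, |t j| ≤ δ) → g t ≤ M := by
  obtain ⟨M, hM⟩ := Finite.exists_le (fun σ : ι → Bool => g (fun i => if σ i then δ else -δ))
  refine ⟨M, ?_⟩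
  have key : ∀ s : Finset ι, ∀ t : ι → ℝ, (∀ j, |t j| ≤ δ) →
      (∀ i, i ∉ s → t i = δ ∨ t i = -δ) → g t ≤ M := by
    intro s
    induction s using Finset.induction_on with
    | empty =>
      intro t _ h
      have := hM (fun i => decide (t i = δ))
      suffices he : t = fun i => if decide (t i = δ) = true then δ else -δ by
        rw [he]; exact this
      funext i
      by_cases hi : t i = δ
      · simp [hi]
      · have := h i (by simp)
        simp only [hi, false_or] at this
        simp [hi, this]
    | insert i s his ih =>
      intro t ht h
      have h1 := (hconv t ht i).le_max_of_mem_Icc (x := -δ) (y := δ) (z := t i)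
        ⟨le_rfl, by linarith⟩ ⟨by linarith, le_rfl⟩ (abs_le.mp (ht i))
      simp only [Function.update_eq_self] at h1
      refine h1.trans (max_le ?_ ?_)
      · apply ih
        · intro j
          by_cases hj : j = i
          · subst hj; simp [abs_of_pos hδ]
          · simp [hj, ht j]
        · intro j hj
          by_cases hji : j = i
          · subst hji; simp
          · simpa [hji] using h j (by simp [hji, hj])
      · apply ih
        · intro j
          by_cases hj : j = i
          · subst hj; simp [abs_of_pos hδ]
          · simp [hj, ht j]
        · intro j hj
          by_cases hji : j = i
          · subst hji; simp
          · simpa [hji] using h j (by simp [hji, hj])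
  intro t ht
  exact key Finset.univ t ht (by simp)

lemma sep_lower {ι : Type*} [Fintype ι] [DecidableEq ι] (g : (ι → ℝ) → ℝ) (δ : ℝ) (hδ : 0 < δ)
    (hconv : ∀ t : ι → ℝ, (∀ j, |t j| ≤ δ) → ∀ i,
      ConvexOn ℝ (Icc (-δ) δ) (fun s => g (Function.update t i s))) :
    ∃ m, ∀ t : ι → ℝ, (∀ j, |t j| ≤ δ) → m ≤ g t := by
  obtain ⟨M, hM⟩ := sep_upper g δ hδ hconv
  have key : ∀ s : Finset ι, ∃ m, ∀ t : ι → ℝ, (∀ j, |t j| ≤ δ) →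
      (∀ i, i ∉ s → t i = 0) → m ≤ g t := by
    intro s
    induction s using Finset.induction_on with
    | empty =>
      refine ⟨g 0, fun t _ h => ?_⟩
      have : t = 0 := by ext i; exact h i (by simp)
      rw [this]
    | insert i s his ih =>
      obtain ⟨m, hm⟩ := ih
      refine ⟨2 * m - M, fun t ht h => ?_⟩
      have hi := abs_le.mp (ht i)
      have hni : - t i ∈ Icc (-δ) δ := ⟨by linarith, by linarith⟩
      have hc := (hconv t ht i).2
      have h1 := hc hi hni (by norm_num : (0:ℝ) ≤ 1/2) (by norm_num : (0:ℝ) ≤ 1/2) (by norm_num)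
      have h0 : 1/2 * t i + 1/2 * (- t i) = 0 := by ring
      simp only [smul_eq_mul, h0, Function.update_eq_self] at h1
      have h2 : m ≤ g (Function.update t i 0) := by
        apply hm
        · intro j
          by_cases hj : j = i
          · subst hj; simp [hδ.le]
          · simp [hj, ht j]
        · intro j hj
          by_cases hji : j = i
          · subst hji; simp
          · simpa [hji] using h j (by simp [hji, hj])
      have h3 : g (Function.update t i (- t i)) ≤ M := by
        apply hM
        intro j
        by_cases hj : j = i
        · subst hj; simp [ht j]
        · simp [hj, ht j]
      linarith
  obtain ⟨m, hm⟩ := key Finset.univ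
  exact ⟨m, fun t ht => hm t ht (by simp)⟩

lemma sep_lip {ι : Type*} [Fintype ι] [DecidableEq ι] (g : (ι → ℝ) → ℝ) (δ : ℝ) (hδ : 0 < δ)
    (hconv : ∀ t : ι → ℝ, (∀ j, |t j| ≤ δ) → ∀ i,
      ConvexOn ℝ (Icc (-δ) δ) (fun s => g (Function.update t i s))) :
    ∃ L : ℝ, 0 ≤ L ∧ ∀ t t' : ι → ℝ, (∀ j, |t j| ≤ δ / 2) → (∀ j, |t' j| ≤ δ / 2) →
      |g t - g t'| ≤ L * ‖t - t'‖ := by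
  obtain ⟨M, hM⟩ := sep_upper g δ hδ hconv
  obtain ⟨m, hm⟩ := sep_lower g δ hδ hconv
  set B := max |M| |m| with hB
  have hbd : ∀ t : ι → ℝ, (∀ j, |t j| ≤ δ) → |g t| ≤ B := by
    intro t ht
    exact abs_le_max_abs_abs (hm t ht) (hM t ht) |>.trans (by rw [hB, max_comm])
  set K : ℝ := ((2 * B / (δ/4)).toNNReal : ℝ) with hK
  have hK0 : 0 ≤ K := NNReal.coe_nonneg _
  have one : ∀ t : ι → ℝ, (∀ j, |t j| ≤ δ / 2) → ∀ i a, |a| ≤ δ / 2 →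
      |g t - g (Function.update t i a)| ≤ K * |t i - a| := by
    intro t ht i a ha
    have ht' : ∀ j, |t j| ≤ δ := fun j => (ht j).trans (by linarith)
    have hsub : ball (0:ℝ) δ ⊆ Icc (-δ) δ := by
      intro x hx
      rw [mem_ball_zero_iff, Real.norm_eq_abs] at hx
      exact abs_le.mp hx.le
    have hc := (hconv t ht' i).subset hsub (convex_ball _ _)
    have hl := hc.lipschitzOnWith_of_abs_le (ε := δ/4) (M := B) (by linarith) (by
      intro x hx
      apply hbd
      intro j
      rw [dist_zero_right, Real.norm_eq_abs] at hx
      by_cases hj : j = i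
      · subst hj; simp [hx.le]
      · simp [hj, ht' j])
    have := hl.dist_le_mul (t i) (by
      rw [mem_ball_zero_iff, Real.norm_eq_abs]; have := ht i; linarith) a (by
      rw [mem_ball_zero_iff, Real.norm_eq_abs]; linarith)
    rw [Real.dist_eq, Real.dist_eq] at this
    simpa only [Function.update_eq_self] using this
  have key : ∀ (r : ℝ) (t' : ι → ℝ), (∀ j, |t' j| ≤ δ / 2) → ∀ s : Finset ι, ∀ t : ι → ℝ,
      (∀ j, |t j| ≤ δ / 2) → (∀ i, i ∉ s → t i = t' i) → (∀ i, |t i - t' i| ≤ r) →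
      |g t - g t'| ≤ K * s.card * r := by
    intro r t' ht' s
    induction s using Finset.induction_on with
    | empty =>
      intro t _ h _
      have : t = t' := by ext i; exact h i (by simp)
      simp [this]
    | insert i s his ih =>
      intro t ht h hr
      have h1 := one t ht i (t' i) (ht' i)
      have h2 := ih (Function.update t i (t' i)) (by
        intro j
        by_cases hj : j = i
        · subst hj; simp [ht' j]
        · simp [hj, ht j]) (by
        intro j hj
        by_cases hji : j = i
        · subst hji; simp
        · simpa [hji] using h j (by simp [hji, hj])) (by
        intro j
        by_cases hj : j = i
        · subst hj; simpa using (abs_nonneg _).trans (hr j)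
        · simp [hj, hr j])
      have h3 := mul_le_mul_of_nonneg_left (hr i) hK0
      have h4 := abs_sub_le (g t) (g (Function.update t i (t' i))) (g t')
      rw [Finset.card_insert_of_notMem his]
      push_cast
      linarith
  refine ⟨K * Fintype.card ι, by positivity, fun t t' ht ht' => ?_⟩
  exact key ‖t - t'‖ t' ht' Finset.univ t ht (by simp) (fun i => norm_le_pi_norm (t - t') i)

/-- Convexity along directions in `D`, as an inequality. -/
def DC {V : Type*} [NormedAddCommGroup V] [NormedSpace ℝ V]
    (D C : Set V) (f : V → ℝ) : Prop :=
  ∀ x ∈ C, ∀ d ∈ D, x + d ∈ C → ∀ a : ℝ, 0 ≤ a → a ≤ 1 →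
    f (x + a • d) ≤ (1 - a) * f x + a * f (x + d)

/-- Lipschitz near a point. -/
def LipNear {V : Type*} [NormedAddCommGroup V] (f : V → ℝ) (e : V) : Prop :=
  ∃ L : ℝ, 0 ≤ L ∧ ∃ r : ℝ, 0 < r ∧ ∀ x y, ‖x - e‖ < r → ‖y - e‖ < r → |f x - f y| ≤ L * ‖x - y‖

lemma dc_lip {V : Type*} [NormedAddCommGroup V] [NormedSpace ℝ V] [FiniteDimensional ℝ V]
    (D : Set V) (hDbal : ∀ (t : ℝ), ∀ x ∈ D, t • x ∈ D)
    {ι : Type*} [Fintype ι] (b : Module.Basis ι ℝ V) (hb : ∀ i, b i ∈ D)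
    (C : Set V) (hCopen : IsOpen C) (f : V → ℝ) (hf : DC D C f) (e : V) (he : e ∈ C) :
    LipNear f e := by
  classical
  set E := b.equivFunL with hE
  have hcont : Continuous (fun t : ι → ℝ => e + E.symm t) := by fun_prop
  have hop := hCopen.preimage hcont
  obtain ⟨δ', hδ', hball⟩ := Metric.isOpen_iff.mp hop 0 (by simpa using he)
  set δ := δ' / 2 with hδdef
  have hδ : 0 < δ := by positivity
  have hmem : ∀ t : ι → ℝ, (∀ j, |t j| ≤ δ) → e + E.symm t ∈ C := by
    intro t ht
    apply hball
    rw [mem_ball_zero_iff]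
    have : ‖t‖ ≤ δ := (pi_norm_le_iff_of_nonneg hδ.le).2 ht
    linarith
  have hupd : ∀ (t : ι → ℝ) i (s s' : ℝ), e + E.symm (Function.update t i s') =
      e + E.symm (Function.update t i s) + (s' - s) • b i := by
    intro t i s s'
    have : Function.update t i s' = Function.update t i s + (s' - s) • Pi.single i 1 := by
      ext j
      by_cases hj : j = i
      · subst hj; simp
      · simp [hj]
    rw [this, map_add, map_smul, add_assoc]
    congr 3
    rw [ContinuousLinearEquiv.symm_apply_eq]
    ext j
    simp [hE, Module.Basis.equivFunL, Pi.single_apply, Finsupp.single_apply, eq_comm]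
  have hconv : ∀ t : ι → ℝ, (∀ j, |t j| ≤ δ) → ∀ i,
      ConvexOn ℝ (Icc (-δ) δ) (fun s => f (e + E.symm (Function.update t i s))) := by
    intro t ht i
    have hm : ∀ s ∈ Icc (-δ) δ, e + E.symm (Function.update t i s) ∈ C := by
      intro s hs
      apply hmem
      intro j
      by_cases hj : j = i
      · subst hj; simpa using abs_le.mpr hs
      · simp [hj, ht j]
    refine ⟨convex_Icc _ _, ?_⟩
    intro x hx y hy p q hp hq hpq
    have h1 := hf _ (hm x hx) ((y - x) • b i) (hDbal _ _ (hb i))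
      (by rw [← hupd]; exact hm y hy) q hq (by linarith)
    rw [← hupd, smul_smul] at h1
    have h2 : q * (y - x) = (p • x + q • y) - x := by
      simp only [smul_eq_mul]
      have : p = 1 - q := by linarith
      subst this; ring
    rw [h2, ← hupd] at h1
    have : p = 1 - q := by linarith
    subst this
    simpa using h1
  obtain ⟨L, hL, hlip⟩ := sep_lip (fun t => f (e + E.symm t)) δ hδ hconv
  set N := ‖(E : V →L[ℝ] (ι → ℝ))‖ with hN
  have hEn : ∀ v, ‖E v‖ ≤ N * ‖v‖ := fun v => (E : V →L[ℝ] (ι → ℝ)).le_opNorm v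
  have hN0 : 0 ≤ N := norm_nonneg _
  refine ⟨L * N, by positivity, δ / 2 / (N + 1), by positivity, fun x y hx hy => ?_⟩
  have hsmall : ∀ x : V, ‖x - e‖ < δ / 2 / (N + 1) → ∀ j, |E (x - e) j| ≤ δ / 2 := by
    intro x hx j
    rw [lt_div_iff₀ (by positivity)] at hx
    have h1 := norm_le_pi_norm (E (x - e)) j
    have h2 := hEn (x - e)
    rw [Real.norm_eq_abs] at h1
    nlinarith [norm_nonneg (x - e)]
  have := hlip (E (x - e)) (E (y - e)) (hsmall x hx) (hsmall y hy)
  simp only [ContinuousLinearEquiv.symm_apply_apply, add_sub_cancel, ← map_sub,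
    sub_sub_sub_cancel_right] at this
  refine this.trans ?_
  rw [mul_assoc]
  exact mul_le_mul_of_nonneg_left (hEn _) hL

section
open Filter Topology

lemma blowup {V : Type*} [NormedAddCommGroup V] [NormedSpace ℝ V]
    (D : Set V) (hDbal : ∀ (t : ℝ), ∀ x ∈ D, t • x ∈ D)
    (C : Set V) (hCopen : IsOpen C)
    (hCcone : ∀ ⦃s t : ℝ⦄, 0 < s → 0 < t → ∀ ⦃x y : V⦄, x ∈ C → y ∈ C → s • x + t • y ∈ C)
    (f : V → ℝ) (hf : DC D C f)
    (hhom : ∀ t : ℝ, 0 < t → ∀ x ∈ C, f (t • x) = t * f x)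
    (e : V) (heC : e ∈ C) (heD : e ∈ D) (hlip : LipNear f e) :
    ∃ h : V → ℝ, DC D univ h ∧ (∀ t : ℝ, 0 < t → ∀ x, h (t • x) = t * h x) ∧
      (∀ x, LipNear h x) ∧ (∀ y ∈ C, h y ≤ f y) ∧
      (∀ y (t : ℝ), h (y + t • e) = h y + t * f e) ∧
      (∀ (d : V) (c : ℝ), (∀ y ∈ C, ∀ t : ℝ, y + t • d ∈ C → f (y + t • d) = f y + t * c) →
        ∀ y (t : ℝ), h (y + t • d) = h y + t * c) := by
  obtain ⟨L, hL, r, hr, hlip⟩ := hlip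
  have hscale : ∀ y : V, Tendsto (fun t : ℝ => e + t⁻¹ • y) atTop (𝓝 e) := by
    intro y
    have := (tendsto_inv_atTop_zero (𝕜 := ℝ)).smul_const y
    simpa using this.const_add e
  have hcont : ContinuousAt f e := by
    rw [Metric.continuousAt_iff]
    intro ε hε
    refine ⟨min r (ε / (L + 1)), by positivity, fun x hx => ?_⟩
    rw [dist_eq_norm] at hx
    have h1 := hlip x e (hx.trans_le (min_le_left _ _)) (by simpa using hr)
    have h2 := hx.trans_le (min_le_right _ _)
    rw [lt_div_iff₀ (by positivity)] at h2
    rw [Real.dist_eq]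
    nlinarith [norm_nonneg (x - e)]
  have hfac : ∀ (y : V) (t : ℝ), 0 < t → y + t • e = t • (e + t⁻¹ • y) := by
    intro y t ht
    rw [smul_add, smul_smul, mul_inv_cancel₀ ht.ne', one_smul, add_comm]
  have hevC' : ∀ y : V, ∀ᶠ t : ℝ in atTop, e + t⁻¹ • y ∈ C :=
    fun y => (hscale y).eventually (hCopen.mem_nhds heC)
  have hsm : ∀ {x : V} {s : ℝ}, 0 < s → x ∈ C → s • x ∈ C := by
    intro x s hs hx
    have := hCcone (half_pos hs) (half_pos hs) hx hx
    rwa [← add_smul, add_halves] at this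
  have hevC : ∀ y : V, ∀ᶠ t : ℝ in atTop, y + t • e ∈ C := by
    intro y
    filter_upwards [hevC' y, eventually_gt_atTop 0] with t h1 h2
    rw [hfac y t h2]
    exact hsm h2 h1
  have hevf : ∀ y : V, ∀ᶠ t : ℝ in atTop, f (y + t • e) = t * f (e + t⁻¹ • y) := by
    intro y
    filter_upwards [hevC' y, eventually_gt_atTop 0] with t h1 h2
    rw [hfac y t h2, hhom t h2 _ h1]
  have hadd : ∀ z ∈ C, ∀ s : ℝ, 0 ≤ s → z + s • e ∈ C := by
    intro z hz s hs
    rcases hs.eq_or_lt with rfl | hs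
    · simpa using hz
    · simpa using hCcone one_pos hs hz heC
  have hdesc : ∀ z ∈ C, ∀ s : ℝ, 0 ≤ s → f (z + s • e) ≤ f z + s * f e := by
    intro z hz s hs
    have hlim : Tendsto (fun N : ℝ => (1 - s * N⁻¹) * f z + s * f (e + N⁻¹ • z)) atTop
        (𝓝 ((1 - s * 0) * f z + s * f e)) := by
      have h1 := tendsto_inv_atTop_zero (𝕜 := ℝ)
      have h2 := hcont.tendsto.comp (hscale z)
      exact (((h1.const_mul s).const_sub 1).mul_const (f z)).add (h2.const_mul s)
    have h3 : f (z + s • e) ≤ (1 - s * 0) * f z + s * f e := by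
      refine ge_of_tendsto hlim ?_
      filter_upwards [hevf z, eventually_gt_atTop 0, eventually_ge_atTop s] with N h1 h2 h3
      have := hf z hz (N • e) (hDbal _ _ heD) (hadd z hz N h2.le) (s * N⁻¹) (by positivity)
        (by rw [← div_eq_mul_inv, div_le_one h2]; exact h3)
      rw [h1, smul_smul, mul_assoc, inv_mul_cancel₀ h2.ne', mul_one] at this
      refine this.trans (le_of_eq ?_)
      field_simp
    simpa using h3
  have hevlip : ∀ y z : V, ∀ᶠ t : ℝ in atTop,
      |(f (y + t • e) - t * f e) - (f (z + t • e) - t * f e)| ≤ L * ‖y - z‖ := by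
    intro y z
    have hb : ∀ y : V, ∀ᶠ t : ℝ in atTop, ‖e + t⁻¹ • y - e‖ < r := by
      intro y
      have := (hscale y).eventually (Metric.ball_mem_nhds e hr)
      simpa only [mem_ball, dist_eq_norm] using this
    filter_upwards [hevf y, hevf z, hb y, hb z, eventually_gt_atTop 0] with t h1 h2 h3 h4 h5
    have := hlip _ _ h3 h4
    rw [add_sub_add_left_eq_sub, ← smul_sub, norm_smul, norm_inv, Real.norm_eq_abs,
      abs_of_pos h5] at this
    rw [h1, h2, sub_sub_sub_cancel_right, ← mul_sub, abs_mul, abs_of_pos h5]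
    calc _ ≤ t * (L * (t⁻¹ * ‖y - z‖)) := mul_le_mul_of_nonneg_left this h5.le
      _ = _ := by field_simp
  have hex : ∀ y : V, ∃ l : ℝ, Tendsto (fun t : ℝ => f (y + t • e) - t * f e) atTop (𝓝 l) := by
    intro y
    have hz := hevlip y 0
    have h0 := hevf 0
    obtain ⟨T, hT⟩ := eventually_atTop.mp ((hevC y).and (hz.and h0))
    set v : ℝ → ℝ := fun t => f (y + (max t T) • e) - (max t T) * f e with hv
    have hanti : Antitone v := by
      intro a c hac
      have hm : max a T ≤ max c T := max_le_max_right T hac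
      have := hdesc _ (hT (max a T) (le_max_right _ _)).1 (max c T - max a T) (by linarith)
      rw [add_assoc, ← add_smul, add_sub_cancel] at this
      simp only [hv]
      linarith
    have hbdd : BddBelow (range v) := by
      refine ⟨-(L * ‖y - 0‖), ?_⟩
      rintro _ ⟨t, rfl⟩
      obtain ⟨-, h1, h2⟩ := hT (max t T) (le_max_right _ _)
      rw [h2] at h1
      simp only [smul_zero, add_zero, sub_self, sub_zero] at h1
      simpa [hv] using (abs_le.mp h1).1
    refine ⟨_, (tendsto_atTop_ciInf hanti hbdd).congr' ?_⟩
    filter_upwards [eventually_ge_atTop T] with t ht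
    simp [hv, max_eq_left ht]
  choose h hh using hex
  refine ⟨h, ?_, ?_, ?_, ?_, ?_, ?_⟩
  · intro x _ d hd _ a ha0 ha1
    refine le_of_tendsto_of_tendsto (hh (x + a • d))
      (((hh x).const_mul (1 - a)).add ((hh (x + d)).const_mul a)) ?_
    filter_upwards [hevC x, hevC (x + d)] with t h1 h2
    have := hf _ h1 d hd (by rwa [add_right_comm]) a ha0 ha1
    rw [add_right_comm x (a • d), add_right_comm x d]
    linarith
  · intro s hs x
    have h1 := ((hh x).comp (tendsto_id.atTop_div_const hs)).const_mul s
    refine tendsto_nhds_unique ((hh (s • x))) (h1.congr' ?_)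
    filter_upwards [(tendsto_id.atTop_div_const hs).eventually (hevC x)] with t ht
    have := hhom s hs _ ht
    simp only [id, Function.comp] at this ⊢
    rw [smul_add, smul_smul, mul_div_cancel₀ _ hs.ne'] at this
    rw [this]
    field_simp
  · intro x
    refine ⟨L, hL, 1, one_pos, fun y z _ _ => ?_⟩
    exact le_of_tendsto (((hh y).sub (hh z)).abs) (hevlip y z)
  · intro y hy
    refine le_of_tendsto (hh y) ?_
    filter_upwards [eventually_ge_atTop 0] with t ht
    linarith [hdesc y hy t ht]
  · intro y τ
    have h1 := ((hh y).comp (tendsto_atTop_add_const_right atTop τ tendsto_id)).add_const (τ * f e)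
    refine tendsto_nhds_unique (hh (y + τ • e)) (h1.congr ?_)
    intro t
    simp only [id, Function.comp]
    rw [add_assoc, ← add_smul, add_comm τ t]
    ring
  · intro d c hdc y τ
    refine tendsto_nhds_unique (hh (y + τ • d)) (((hh y).add_const (τ * c)).congr' ?_)
    filter_upwards [hevC y, hevC (y + τ • d)] with t h1 h2
    rw [add_right_comm] at h2 ⊢
    rw [hdc _ h1 τ h2]
    ring

end

/-- Theorem 1 of the paper: a D-convex positively 1-homogeneous
function on an open convex cone is convex at each point of `C ∩ D`: it admits a
supporting linear functional there. -/
theorem dconvex_homog_convex_at_directions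
    {V : Type*} [NormedAddCommGroup V] [NormedSpace ℝ V] [FiniteDimensional ℝ V]
    (D : Set V) (hDbal : ∀ (t : ℝ), ∀ x ∈ D, t • x ∈ D)
    (hDspan : Submodule.span ℝ D = ⊤)
    (C : Set V) (hCopen : IsOpen C)
    (hCcone : ∀ ⦃s t : ℝ⦄, 0 < s → 0 < t → ∀ ⦃x y : V⦄, x ∈ C → y ∈ C → s • x + t • y ∈ C)
    (f : V → ℝ) (hf : DConvexOn D C f)
    (hhom : ∀ t : ℝ, 0 < t → ∀ x ∈ C, f (t • x) = t * f x)
    (x₀ : V) (hx₀ : x₀ ∈ C ∩ D) :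
    ∃ ℓ : V →ₗ[ℝ] ℝ, ℓ x₀ = f x₀ ∧ ∀ y ∈ C, ℓ y ≤ f y := by
  obtain ⟨hx₀C, hx₀D⟩ := hx₀
  have hdc : DC D C f := by
    intro x hx d hd hxd a ha0 ha1
    have hseg : segment ℝ (x + d) x ⊆ C := by
      rintro _ ⟨p, q, hp, hq, hpq, rfl⟩
      rcases hp.eq_or_lt with rfl | hp
      · have : q = 1 := by linarith
        subst this; simpa using hx
      rcases hq.eq_or_lt with rfl | hq
      · have : p = 1 := by linarith
        subst this; simpa using hxd
      exact hCcone hp hq hxd hx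
    have := (hf hxd hx (by simpa using hd) hseg).2 (right_mem_segment ℝ _ _)
      (left_mem_segment ℝ _ _) (by linarith : 0 ≤ 1 - a) ha0 (by ring)
    have h2 : (1 - a) • x + a • (x + d) = x + a • d := by module
    rw [h2] at this
    simpa using this
  let b := Module.Basis.ofSpan hDspan.ge
  have hb : ∀ i, b i ∈ D := fun i => Module.Basis.ofSpan_subset hDspan.ge (mem_range_self i)
  have : Fintype _ := FiniteDimensional.fintypeBasisIndex b
  classical
  obtain ⟨h₀, g1, g2, g3, g4, g5, -⟩ := blowup D hDbal C hCopen hCcone f hdc hhom x₀ hx₀C hx₀D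
    (dc_lip D hDbal b hb C hCopen f hdc x₀ hx₀C)
  have key : ∀ s : Finset _, ∃ h : V → ℝ, DC D univ h ∧
      (∀ t : ℝ, 0 < t → ∀ x, h (t • x) = t * h x) ∧ (∀ x, LipNear h x) ∧
      (∀ y ∈ C, h y ≤ f y) ∧ (∀ y (t : ℝ), h (y + t • x₀) = h y + t * f x₀) ∧
      ∀ i ∈ s, ∃ c : ℝ, ∀ y (t : ℝ), h (y + t • b i) = h y + t * c := by
    intro s
    induction s using Finset.induction_on with
    | empty => exact ⟨h₀, g1, g2, g3, g4, g5, by simp⟩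
    | insert i s his ih =>
      obtain ⟨h, k1, k2, k3, k4, k5, k6⟩ := ih
      obtain ⟨h', l1, l2, l3, l4, l5, l6⟩ := blowup D hDbal univ isOpen_univ (by simp) h k1
        (fun t ht x _ => k2 t ht x) (b i) (mem_univ _) (hb i) (k3 _)
      refine ⟨h', l1, l2, l3, fun y hy => (l4 y (mem_univ _)).trans (k4 y hy),
        l6 _ _ (fun y _ t _ => k5 y t), ?_⟩
      intro j hj
      rcases Finset.mem_insert.mp hj with rfl | hj
      · exact ⟨_, l5⟩
      · obtain ⟨c, hc⟩ := k6 j hj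
        exact ⟨c, l6 _ _ (fun y _ t _ => hc y t)⟩
  obtain ⟨h, k1, k2, k3, k4, k5, k6⟩ := key Finset.univ
  choose c hc using fun i => k6 i (Finset.mem_univ i)
  have h00 : h 0 = 0 := by
    have := k2 2 two_pos 0
    rw [smul_zero] at this
    linarith
  have hsum : ∀ (a : _ → ℝ) (s : Finset _), h (∑ i ∈ s, a i • b i) = ∑ i ∈ s, a i * c i := by
    intro a s
    induction s using Finset.induction_on with
    | empty => simpa using h00
    | insert i s his ih =>
      rw [Finset.sum_insert his, Finset.sum_insert his, add_comm, hc, ih, add_comm]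
  have hℓ : ∀ y, b.constr ℝ c y = h y := by
    intro y
    conv_rhs => rw [← b.sum_repr y]
    rw [hsum, Module.Basis.constr_apply_fintype]
    simp
  refine ⟨b.constr ℝ c, ?_, fun y hy => (hℓ y).trans_le (k4 y hy)⟩
  rw [hℓ]
  have := k5 0 1
  simpa [h00] using this
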